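/- Let C be a binary completely regular code of length 15 with minimum distance 5. Then the number of ordered pairs (α,β) ∈ C × C with d(α,β) = i equals 256 for i = 0, 42·256 for i = 5, 70·256 for i = 6, 15·256 for i = 7, 15·256 for i = 8, 70·256 for i = 9, 42·256 for i = 10, 256 for i = 15, and is 0 for all other values of i; that is, C has distance distribution a(C) = (1,0,0,0,0,42,70,15,15,70,42,0,0,0,0,1). In particular the Hamming distance between any two codewords of C lies in {0, 5, 6, 7, 8, 9, 10, 15}. -/

import Mathlib

open Set

/-- Distance from a vertex to a code in the binary Hamming space. -/
noncomputable def distToCode {m : ℕ} (C : Set (Fin m → ZMod 2)) (x : Fin m → ZMod 2) : ℕ :=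
  sInf {d | ∃ c ∈ C, hammingDist x c = d}

/-- `C` has minimum distance `δ`. -/
def IsMinDist {m : ℕ} (C : Set (Fin m → ZMod 2)) (δ : ℕ) : Prop :=
  (∀ x ∈ C, ∀ y ∈ C, x ≠ y → δ ≤ hammingDist x y) ∧
  ∃ x ∈ C, ∃ y ∈ C, x ≠ y ∧ hammingDist x y = δ

/-- `C` is completely regular: the number of codewords at distance `k` from `γ`
depends only on `distToCode C γ` and `k`. -/
def IsCompletelyRegular {m : ℕ} (C : Set (Fin m → ZMod 2)) : Prop :=
  ∀ γ γ' : Fin m → ZMod 2, distToCode C γ = distToCode C γ' →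
    ∀ k : ℕ, {c ∈ C | hammingDist γ c = k}.ncard = {c ∈ C | hammingDist γ' c = k}.ncard

/-!
Call the distance of a vertex from `C` its level. For a vertex `x` of level `j`, count the pairs
(neighbour of `x`, codeword at distance `k + 1` from that neighbour) in two ways. If `C` is
completely regular and `b j k` is the number of codewords at distance `k` from a vertex of level
`j`, this expresses a combination of the `b l (k + 1)`, with `l` within one of `j`, weighted by the
numbers of neighbours of `x` in the levels `l`, through `b j (k + 2)` and `b j k`.

For length 15 and minimum distance 5 the balls of radius 2 around codewords are disjoint, so the
weights at levels 0 and 1 are `0, 0, 15` and `1, 0, 14`. At level 2 they are `2, 3 λ, 13 - 3 λ` with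
`λ = b 2 3`, and `21 λ = 2 b 0 5 > 0` makes `λ` even, hence `2` or `4`. Divisibility excludes
`λ = 2`, while `λ = 4` gives `b 3 3 = 5`, so that all neighbours of a vertex of level 3 have
level 2. The resulting recursion in `k` then determines every `b j k`.
-/

section Hypercube

variable {m : ℕ}

/-- The neighbour of `x` in the hypercube obtained by changing coordinate `i`. -/
def flipCoord (x : Fin m → ZMod 2) (i : Fin m) : Fin m → ZMod 2 :=
  Function.update x i (x i + 1)

lemma flipCoord_flipCoord (x : Fin m → ZMod 2) (i : Fin m) :
    flipCoord (flipCoord x i) i = x := by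
  have two_eq_zero : (1 + 1 : ZMod 2) = 0 := by decide
  simp [flipCoord, add_assoc, two_eq_zero]

lemma hammingDist_flipCoord_of_ne {x c : Fin m → ZMod 2} {i : Fin m} (h : x i ≠ c i) :
    hammingDist (flipCoord x i) c + 1 = hammingDist x c := by
  have add_one_eq : ∀ a b : ZMod 2, a ≠ b → a + 1 = b := by decide
  have agree_iff : ∀ j, flipCoord x i j ≠ c j ↔ j ≠ i ∧ x j ≠ c j := by
    intro j
    rcases eq_or_ne j i with rfl | hj
    · simp [flipCoord, add_one_eq _ _ h]
    · simp [flipCoord, hj]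
  have support_eq : Finset.univ.filter (fun j => flipCoord x i j ≠ c j) =
      (Finset.univ.filter fun j => x j ≠ c j).erase i := by
    ext j
    simp [agree_iff]
  rw [hammingDist, support_eq, Finset.card_erase_add_one (by simpa using h), hammingDist]

lemma hammingDist_flipCoord_of_eq {x c : Fin m → ZMod 2} {i : Fin m} (h : x i = c i) :
    hammingDist (flipCoord x i) c = hammingDist x c + 1 := by
  have flip_ne : flipCoord x i i ≠ c i := by simp [flipCoord, h]
  simpa [flipCoord_flipCoord] using (hammingDist_flipCoord_of_ne flip_ne).symm

lemma hammingDist_flipCoord_self (x : Fin m → ZMod 2) (i : Fin m) :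
    hammingDist (flipCoord x i) x = 1 := by
  simpa using hammingDist_flipCoord_of_eq (rfl : x i = x i)

/- The truncated `hammingDist x c - 1` at `x = c` is harmless: its coefficient vanishes. -/
lemma sum_hammingDist_flipCoord (x c : Fin m → ZMod 2) (f : ℕ → ℕ) :
    ∑ i, f (hammingDist (flipCoord x i) c) =
      hammingDist x c * f (hammingDist x c - 1) +
        (m - hammingDist x c) * f (hammingDist x c + 1) := by
  have card_agree : (Finset.univ.filter fun i => ¬x i ≠ c i).card = m - hammingDist x c := by
    have := Finset.card_filter_add_card_filter_not (s := Finset.univ) (fun i => x i ≠ c i)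
    simp only [Finset.card_univ, Fintype.card_fin] at this
    rw [hammingDist]
    omega
  have sum_differ : ∑ i with x i ≠ c i, f (hammingDist (flipCoord x i) c) =
      hammingDist x c * f (hammingDist x c - 1) := by
    rw [Finset.sum_congr rfl fun i hi => by
      rw [Nat.eq_sub_of_add_eq (hammingDist_flipCoord_of_ne (Finset.mem_filter.1 hi).2)]]
    rw [Finset.sum_const, smul_eq_mul, hammingDist]
  have sum_agree : ∑ i with ¬x i ≠ c i, f (hammingDist (flipCoord x i) c) =
      (m - hammingDist x c) * f (hammingDist x c + 1) := by
    rw [Finset.sum_congr rfl fun i hi => by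
      rw [hammingDist_flipCoord_of_eq (not_not.1 (Finset.mem_filter.1 hi).2)]]
    rw [Finset.sum_const, smul_eq_mul, card_agree]
  rw [← Finset.sum_filter_add_sum_filter_not Finset.univ (fun i => x i ≠ c i), sum_differ,
    sum_agree]

lemma exists_hammingDist_eq (c : Fin m → ZMod 2) {j : ℕ} (hj : j ≤ m) :
    ∃ x, hammingDist x c = j := by
  induction j with
  | zero => exact ⟨c, hammingDist_self c⟩
  | succ j ih =>
    obtain ⟨x, rfl⟩ := ih (by omega)
    obtain ⟨i, hi⟩ : ∃ i, x i = c i := by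
      by_contra! h
      simp [hammingDist, h] at hj
    exact ⟨flipCoord x i, hammingDist_flipCoord_of_eq hi⟩

end Hypercube

section OuterDistribution

variable {m : ℕ} {C : Set (Fin m → ZMod 2)}

lemma distToCode_le_hammingDist {c : Fin m → ZMod 2} (hc : c ∈ C) (x : Fin m → ZMod 2) :
    distToCode C x ≤ hammingDist x c :=
  Nat.sInf_le ⟨c, hc, rfl⟩

lemma exists_hammingDist_eq_distToCode (hC : C.Nonempty) (x : Fin m → ZMod 2) :
    ∃ c ∈ C, hammingDist x c = distToCode C x :=
  Nat.sInf_mem (s := {d | ∃ c ∈ C, hammingDist x c = d}) ⟨_, hC.some, hC.some_mem, rfl⟩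

lemma distToCode_eq_zero_of_mem {c : Fin m → ZMod 2} (hc : c ∈ C) : distToCode C c = 0 := by
  simpa using distToCode_le_hammingDist hc c

lemma distToCode_le_hammingDist_add (x y : Fin m → ZMod 2) :
    distToCode C x ≤ hammingDist x y + distToCode C y := by
  rcases C.eq_empty_or_nonempty with rfl | hC
  · simp [distToCode]
  · obtain ⟨c, hc, hyc⟩ := exists_hammingDist_eq_distToCode hC y
    rw [← hyc]
    exact (distToCode_le_hammingDist hc x).trans (hammingDist_triangle x y c)

/-- The entry `B(x, k)` of the outer distribution matrix of `C`: the number of codewords at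
distance `k` from the vertex `x`. -/
noncomputable def outerCount (C : Set (Fin m → ZMod 2)) (x : Fin m → ZMod 2) (k : ℕ) : ℕ :=
  {c ∈ C | hammingDist x c = k}.ncard

/-- The number of codewords at distance `k` from a vertex at distance `j` from `C`. This is
meaningful for completely regular `C`; it is encoded as the maximum over all such vertices, hence is
`0` for `j` beyond the covering radius. -/
noncomputable def levelCount (C : Set (Fin m → ZMod 2)) (j k : ℕ) : ℕ :=
  (Finset.univ.filter fun x => distToCode C x = j).sup fun x => outerCount C x k

/-- The number of neighbours of the vertex `x` that lie at distance `l` from `C`; for completely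
regular codes these are the intersection numbers. -/
noncomputable def neighborCount (C : Set (Fin m → ZMod 2)) (x : Fin m → ZMod 2) (l : ℕ) : ℕ :=
  (Finset.univ.filter fun i => distToCode C (flipCoord x i) = l).card

lemma ncard_sep_eq_sum (C : Set (Fin m → ZMod 2)) (p : (Fin m → ZMod 2) → Prop)
    [DecidablePred p] :
    {c ∈ C | p c}.ncard = ∑ c ∈ C.toFinite.toFinset, if p c then 1 else 0 := by
  rw [← Finset.card_filter, ← Set.ncard_coe_finset]
  congr 1
  ext c
  simp

lemma outerCount_pos_iff {x : Fin m → ZMod 2} {k : ℕ} :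
    0 < outerCount C x k ↔ ∃ c ∈ C, hammingDist x c = k :=
  Set.ncard_pos

lemma outerCount_eq_zero_of_lt_distToCode {x : Fin m → ZMod 2} {k : ℕ}
    (hk : k < distToCode C x) : outerCount C x k = 0 := by
  by_contra h
  obtain ⟨c, hc, rfl⟩ := outerCount_pos_iff.1 (Nat.pos_of_ne_zero h)
  exact hk.not_ge (distToCode_le_hammingDist hc x)

lemma levelCount_eq_zero_of_lt {j k : ℕ} (hk : k < j) : levelCount C j k = 0 := by
  refine (Finset.sup_eq_bot_iff _ _).2 fun x hx => ?_
  obtain rfl := (Finset.mem_filter.1 hx).2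
  exact outerCount_eq_zero_of_lt_distToCode hk

lemma sum_outerCount_flipCoord (C : Set (Fin m → ZMod 2)) (x : Fin m → ZMod 2) (k : ℕ) :
    ∑ i, outerCount C (flipCoord x i) k =
      (k + 1) * outerCount C x (k + 1) +
        (m + 1 - k) * {c ∈ C | hammingDist x c + 1 = k}.ncard := by
  simp only [outerCount, ncard_sep_eq_sum]
  rw [Finset.sum_comm, Finset.mul_sum, Finset.mul_sum, ← Finset.sum_add_distrib]
  refine Finset.sum_congr rfl fun c _ => ?_
  rw [sum_hammingDist_flipCoord x c fun d => if d = k then 1 else 0]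
  generalize hammingDist x c = d
  split_ifs <;> omega

lemma sum_outerCount_flipCoord_succ (C : Set (Fin m → ZMod 2)) (x : Fin m → ZMod 2) (k : ℕ) :
    ∑ i, outerCount C (flipCoord x i) (k + 1) =
      (k + 2) * outerCount C x (k + 2) + (m - k) * outerCount C x k := by
  simpa [outerCount] using sum_outerCount_flipCoord C x (k + 1)

lemma sum_outerCount_flipCoord_of_le {x : Fin m → ZMod 2} {k : ℕ} (hk : k ≤ distToCode C x) :
    ∑ i, outerCount C (flipCoord x i) k = (k + 1) * outerCount C x (k + 1) := by
  have no_closer_codeword : {c ∈ C | hammingDist x c + 1 = k} = ∅ := by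
    refine Set.eq_empty_of_forall_notMem fun c ⟨hc, hck⟩ => ?_
    have := distToCode_le_hammingDist hc x
    omega
  rw [sum_outerCount_flipCoord, no_closer_codeword, Set.ncard_empty, mul_zero, add_zero]

lemma sum_distToCode_flipCoord {x : Fin m → ZMod 2} {j : ℕ} (hx : distToCode C x = j + 1)
    (f : ℕ → ℕ) :
    ∑ i, f (distToCode C (flipCoord x i)) =
      neighborCount C x j * f j + neighborCount C x (j + 1) * f (j + 1) +
        neighborCount C x (j + 2) * f (j + 2) := by
  have level_mem : ∀ i ∈ Finset.univ,
      distToCode C (flipCoord x i) ∈ ({j, j + 1, j + 2} : Finset ℕ) := by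
    intro i _
    have upper := distToCode_le_hammingDist_add (C := C) (flipCoord x i) x
    have lower := distToCode_le_hammingDist_add (C := C) x (flipCoord x i)
    rw [hammingDist_flipCoord_self] at upper
    rw [hammingDist_comm, hammingDist_flipCoord_self] at lower
    simp only [Finset.mem_insert, Finset.mem_singleton]
    omega
  have sum_level : ∀ l, ∑ i with distToCode C (flipCoord x i) = l,
      f (distToCode C (flipCoord x i)) = neighborCount C x l * f l := by
    intro l
    rw [Finset.sum_congr rfl fun i hi => by rw [(Finset.mem_filter.1 hi).2], Finset.sum_const,
      smul_eq_mul, neighborCount]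
  rw [← Finset.sum_fiberwise_of_maps_to level_mem]
  simp [sum_level, add_assoc]

lemma neighborCount_add_eq {x : Fin m → ZMod 2} {j : ℕ} (hx : distToCode C x = j + 1) :
    neighborCount C x j + neighborCount C x (j + 1) + neighborCount C x (j + 2) = m := by
  simpa using (sum_distToCode_flipCoord hx fun _ => 1).symm

end OuterDistribution

namespace IsCompletelyRegular

variable {m : ℕ} {C : Set (Fin m → ZMod 2)}

lemma outerCount_eq (hreg : IsCompletelyRegular C) (x : Fin m → ZMod 2) (k : ℕ) :
    outerCount C x k = levelCount C (distToCode C x) k := by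
  have level_nonempty : (Finset.univ.filter fun y => distToCode C y = distToCode C x).Nonempty :=
    ⟨x, by simp⟩
  have same_count : ∀ y ∈ Finset.univ.filter fun y => distToCode C y = distToCode C x,
      outerCount C y k = outerCount C x k :=
    fun y hy => hreg y x (Finset.mem_filter.1 hy).2 k
  rw [levelCount, Finset.sup_congr rfl same_count, Finset.sup_const level_nonempty]

lemma outerCount_eq_of_mem (hreg : IsCompletelyRegular C) {c : Fin m → ZMod 2} (hc : c ∈ C)
    (k : ℕ) : outerCount C c k = levelCount C 0 k := by
  rw [hreg.outerCount_eq, distToCode_eq_zero_of_mem hc]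

lemma levelCount_self_pos (hreg : IsCompletelyRegular C) (hC : C.Nonempty)
    (x : Fin m → ZMod 2) : 0 < levelCount C (distToCode C x) (distToCode C x) := by
  rw [← hreg.outerCount_eq]
  exact outerCount_pos_iff.2 (exists_hammingDist_eq_distToCode hC x)

section Level

variable {x : Fin m → ZMod 2} {j : ℕ}

lemma sum_outerCount_flipCoord_eq (hreg : IsCompletelyRegular C) (hx : distToCode C x = j + 1)
    (k : ℕ) :
    ∑ i, outerCount C (flipCoord x i) k =
      neighborCount C x j * levelCount C j k +
        neighborCount C x (j + 1) * levelCount C (j + 1) k +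
          neighborCount C x (j + 2) * levelCount C (j + 2) k := by
  simp only [hreg.outerCount_eq]
  exact sum_distToCode_flipCoord hx (levelCount C · k)

lemma levelCount_recurrence (hreg : IsCompletelyRegular C) (hx : distToCode C x = j + 1) (k : ℕ) :
    neighborCount C x j * levelCount C j (k + 1) +
        neighborCount C x (j + 1) * levelCount C (j + 1) (k + 1) +
          neighborCount C x (j + 2) * levelCount C (j + 2) (k + 1) =
      (k + 2) * levelCount C (j + 1) (k + 2) + (m - k) * levelCount C (j + 1) k := by
  rw [← hreg.sum_outerCount_flipCoord_eq hx, sum_outerCount_flipCoord_succ, hreg.outerCount_eq,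
    hreg.outerCount_eq, hx]

lemma neighborCount_mul_levelCount_self (hreg : IsCompletelyRegular C)
    (hx : distToCode C x = j + 1) :
    neighborCount C x j * levelCount C j j = (j + 1) * levelCount C (j + 1) (j + 1) := by
  have double_count := hreg.sum_outerCount_flipCoord_eq hx j
  rw [sum_outerCount_flipCoord_of_le (by omega), hreg.outerCount_eq, hx,
    levelCount_eq_zero_of_lt (by omega : j < j + 1),
    levelCount_eq_zero_of_lt (by omega : j < j + 2)] at double_count
  simpa using double_count.symm

lemma neighborCount_mul_levelCount_succ (hreg : IsCompletelyRegular C)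
    (hx : distToCode C x = j + 1) :
    neighborCount C x j * levelCount C j (j + 1) +
        neighborCount C x (j + 1) * levelCount C (j + 1) (j + 1) =
      (j + 2) * levelCount C (j + 1) (j + 2) := by
  have double_count := hreg.sum_outerCount_flipCoord_eq hx (j + 1)
  rw [sum_outerCount_flipCoord_of_le hx.ge, hreg.outerCount_eq, hx,
    levelCount_eq_zero_of_lt (by omega : j + 1 < j + 2)] at double_count
  simpa using double_count.symm

end Level

lemma ncard_eq_sum_levelCount (hreg : IsCompletelyRegular C) (hC : C.Nonempty) :
    C.ncard = ∑ k ∈ Finset.range (m + 1), levelCount C 0 k := by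
  obtain ⟨c, hc⟩ := hC
  have dist_mem : ∀ c' ∈ C.toFinite.toFinset, hammingDist c c' ∈ Finset.range (m + 1) := by
    intro c' _
    simpa [Nat.lt_succ_iff] using hammingDist_le_card_fintype (x := c) (y := c')
  rw [Set.ncard_eq_toFinset_card C, Finset.card_eq_sum_card_fiberwise dist_mem]
  refine Finset.sum_congr rfl fun k _ => ?_
  rw [Finset.card_filter, ← ncard_sep_eq_sum, ← hreg.outerCount_eq_of_mem hc, outerCount]

lemma ncard_pairs_eq (hreg : IsCompletelyRegular C) (k : ℕ) :
    {p : (Fin m → ZMod 2) × (Fin m → ZMod 2) |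
        p.1 ∈ C ∧ p.2 ∈ C ∧ hammingDist p.1 p.2 = k}.ncard = C.ncard * levelCount C 0 k := by
  have pairs_eq : {p : (Fin m → ZMod 2) × (Fin m → ZMod 2) |
        p.1 ∈ C ∧ p.2 ∈ C ∧ hammingDist p.1 p.2 = k} =
      ((C.toFinite.toFinset ×ˢ C.toFinite.toFinset).filter
        fun p => hammingDist p.1 p.2 = k : Finset _) := by
    ext p
    simp [and_assoc]
  have inner_sum : ∀ c ∈ C.toFinite.toFinset,
      (∑ c' ∈ C.toFinite.toFinset, if hammingDist c c' = k then 1 else 0) = levelCount C 0 k := by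
    intro c hc
    rw [← ncard_sep_eq_sum, ← hreg.outerCount_eq_of_mem (C.toFinite.mem_toFinset.1 hc), outerCount]
  rw [pairs_eq, Set.ncard_coe_finset, Finset.card_filter, Finset.sum_product,
    Finset.sum_congr rfl inner_sum, Finset.sum_const, smul_eq_mul, ← Set.ncard_eq_toFinset_card]

end IsCompletelyRegular

namespace IsMinDist

variable {m δ : ℕ} {C : Set (Fin m → ZMod 2)}

lemma nonempty (hd : IsMinDist C δ) : C.Nonempty :=
  let ⟨_, c, hc, _⟩ := hd
  ⟨c, hc⟩

lemma le_length (hd : IsMinDist C δ) : δ ≤ m := by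
  obtain ⟨-, c, -, c', -, -, rfl⟩ := hd
  simpa using hammingDist_le_card_fintype (x := c) (y := c')

lemma le_hammingDist_add (hd : IsMinDist C δ) {c c' : Fin m → ZMod 2} (hc : c ∈ C)
    (hc' : c' ∈ C) (hne : c ≠ c') (x : Fin m → ZMod 2) :
    δ ≤ hammingDist x c + hammingDist x c' :=
  (hd.1 c hc c' hc' hne).trans (hammingDist_triangle_left c c' x)

lemma distToCode_eq_hammingDist (hd : IsMinDist C δ) {x c : Fin m → ZMod 2} (hc : c ∈ C)
    (h : 2 * hammingDist x c ≤ δ) : distToCode C x = hammingDist x c := by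
  refine (distToCode_le_hammingDist hc x).antisymm ?_
  obtain ⟨c', hc', hxc'⟩ := exists_hammingDist_eq_distToCode ⟨c, hc⟩ x
  rw [← hxc']
  rcases eq_or_ne c c' with rfl | hne
  · rfl
  · have := hd.le_hammingDist_add hc hc' hne x
    omega

lemma exists_mem_distToCode_eq (hd : IsMinDist C δ) {j : ℕ} (hj : 2 * j ≤ δ) :
    ∃ x, ∃ c ∈ C, hammingDist x c = j ∧ distToCode C x = j := by
  obtain ⟨c, hc⟩ := hd.nonempty
  have := hd.le_length
  obtain ⟨x, rfl⟩ := exists_hammingDist_eq c (by omega : j ≤ m)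
  exact ⟨x, c, hc, rfl, hd.distToCode_eq_hammingDist hc hj⟩

lemma outerCount_eq (hd : IsMinDist C δ) {x c : Fin m → ZMod 2} (hc : c ∈ C) {k : ℕ}
    (h : hammingDist x c + k < δ) :
    outerCount C x k = if k = hammingDist x c then 1 else 0 := by
  have eq_of_hammingDist_eq : ∀ c' ∈ C, hammingDist x c' = k → c = c' := by
    rintro c' hc' rfl
    by_contra hne
    exact h.not_ge (hd.le_hammingDist_add hc hc' hne x)
  split_ifs with hk
  · refine Set.ncard_eq_one.2 ⟨c, Set.eq_singleton_iff_unique_mem.2 ⟨⟨hc, hk.symm⟩, ?_⟩⟩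
    exact fun c' hc' => (eq_of_hammingDist_eq c' hc'.1 hc'.2).symm
  · by_contra hpos
    obtain ⟨c', hc', hxc'⟩ := outerCount_pos_iff.1 (Nat.pos_of_ne_zero hpos)
    exact hk (eq_of_hammingDist_eq c' hc' hxc' ▸ hxc'.symm)

lemma levelCount_eq (hd : IsMinDist C δ) (hreg : IsCompletelyRegular C) {j k : ℕ}
    (h : j + k < δ) : levelCount C j k = if k = j then 1 else 0 := by
  rcases lt_or_ge k j with hkj | hjk
  · rw [levelCount_eq_zero_of_lt hkj, if_neg hkj.ne]
  · obtain ⟨x, c, hc, rfl, hx⟩ := hd.exists_mem_distToCode_eq (by omega : 2 * j ≤ δ)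
    rw [← hd.outerCount_eq hc h, hreg.outerCount_eq, hx]

lemma levelCount_zero_pos (hd : IsMinDist C δ) (hreg : IsCompletelyRegular C) :
    0 < levelCount C 0 δ := by
  obtain ⟨-, c, hc, c', hc', -, hcc'⟩ := hd
  rw [← hreg.outerCount_eq_of_mem hc]
  exact outerCount_pos_iff.2 ⟨c', hc', hcc'⟩

/- Below the packing radius, level and distance to the nearest codeword agree for all neighbours
of a vertex, so the numbers of neighbours in each level are those of the hypercube. -/
lemma levelCount_recurrence (hd : IsMinDist C δ) (hreg : IsCompletelyRegular C) {j : ℕ}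
    (hj : 2 * (j + 1) ≤ δ) (k : ℕ) :
    j * levelCount C (j - 1) (k + 1) + (m - j) * levelCount C (j + 1) (k + 1) =
      (k + 2) * levelCount C j (k + 2) + (m - k) * levelCount C j k := by
  obtain ⟨x, c, hc, hxc, hx⟩ := hd.exists_mem_distToCode_eq (by omega : 2 * j ≤ δ)
  have neighbor_level : ∀ i, distToCode C (flipCoord x i) = hammingDist (flipCoord x i) c := by
    intro i
    have := hammingDist_triangle (flipCoord x i) x c
    rw [hammingDist_flipCoord_self] at this
    exact hd.distToCode_eq_hammingDist hc (by omega)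
  calc j * levelCount C (j - 1) (k + 1) + (m - j) * levelCount C (j + 1) (k + 1)
      = ∑ i, levelCount C (hammingDist (flipCoord x i) c) (k + 1) := by
        rw [sum_hammingDist_flipCoord x c (levelCount C · (k + 1)), hxc]
    _ = ∑ i, outerCount C (flipCoord x i) (k + 1) := by
        simp only [hreg.outerCount_eq, neighbor_level]
    _ = (k + 2) * levelCount C j (k + 2) + (m - k) * levelCount C j k := by
        rw [sum_outerCount_flipCoord_succ, hreg.outerCount_eq, hreg.outerCount_eq, hx]

end IsMinDist

section OuterRecurrence

variable {ι : Type*} [Fintype ι]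

/-- The three-term recurrence satisfied by the outer distribution `b` of a code of length `m` whose
distance partition is equitable: entry `T j l` stands for the number of neighbours in level `l` of a
vertex in level `j`. -/
def SatisfiesOuterRecurrence (T : Matrix ι ι ℕ) (m : ℕ) (b : ι → ℕ → ℕ) : Prop :=
  ∀ j k, ∑ l, T j l * b l (k + 1) = (k + 2) * b j (k + 2) + (m - k) * b j k

lemma SatisfiesOuterRecurrence.unique {T : Matrix ι ι ℕ} {m : ℕ} {b b' : ι → ℕ → ℕ}
    (hb : SatisfiesOuterRecurrence T m b) (hb' : SatisfiesOuterRecurrence T m b')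
    (h_zero : ∀ j, b j 0 = b' j 0) (h_one : ∀ j, b j 1 = b' j 1) (j : ι) (k : ℕ) :
    b j k = b' j k := by
  induction k using Nat.twoStepInduction generalizing j with
  | zero => exact h_zero j
  | one => exact h_one j
  | more k ih ih_succ =>
    have recurrences_agree := hb j k
    simp only [ih, ih_succ, hb' j k] at recurrences_agree
    exact (Nat.eq_of_mul_eq_mul_left (by omega) (Nat.add_right_cancel recurrences_agree)).symm

end OuterRecurrence

namespace LengthFifteen

variable {C : Set (Fin 15 → ZMod 2)}

lemma two_mul_levelCount_one_four (hreg : IsCompletelyRegular C) (hd : IsMinDist C 5) :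
    2 * levelCount C 1 4 = 7 * levelCount C 2 3 := by
  have level_one := hd.levelCount_recurrence hreg (j := 1) (by norm_num) 2
  norm_num [hd.levelCount_eq hreg] at level_one
  omega

lemma fourteen_mul_levelCount_two_four (hreg : IsCompletelyRegular C) (hd : IsMinDist C 5) :
    14 * levelCount C 2 4 = 5 * levelCount C 1 5 := by
  have level_one := hd.levelCount_recurrence hreg (j := 1) (by norm_num) 3
  norm_num [hd.levelCount_eq hreg] at level_one
  omega

lemma two_mul_levelCount_zero_five (hreg : IsCompletelyRegular C) (hd : IsMinDist C 5) :
    2 * levelCount C 0 5 = 21 * levelCount C 2 3 := by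
  have level_zero := hd.levelCount_recurrence hreg (j := 0) (by norm_num) 3
  have level_one := two_mul_levelCount_one_four hreg hd
  norm_num [hd.levelCount_eq hreg] at level_zero
  omega

lemma neighborCount_of_distToCode_eq_two (hreg : IsCompletelyRegular C) (hd : IsMinDist C 5)
    {x : Fin 15 → ZMod 2} (hx : distToCode C x = 2) :
    neighborCount C x 1 = 2 ∧ neighborCount C x 2 = 3 * levelCount C 2 3 ∧
      neighborCount C x 3 + 3 * levelCount C 2 3 = 13 := by
  have down := hreg.neighborCount_mul_levelCount_self hx
  have across := hreg.neighborCount_mul_levelCount_succ hx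
  have total := neighborCount_add_eq hx
  norm_num [hd.levelCount_eq hreg] at down across total
  omega

lemma exists_distToCode_eq_three (hreg : IsCompletelyRegular C) (hd : IsMinDist C 5) :
    ∃ y, distToCode C y = 3 := by
  obtain ⟨x, -, -, -, hx⟩ := hd.exists_mem_distToCode_eq (by norm_num : 2 * 2 ≤ 5)
  have up : 0 < neighborCount C x 3 := by
    have := neighborCount_of_distToCode_eq_two hreg hd hx
    omega
  obtain ⟨i, hi⟩ := Finset.card_pos.1 up
  exact ⟨flipCoord x i, (Finset.mem_filter.1 hi).2⟩

lemma levelCount_two_recurrence (hreg : IsCompletelyRegular C) (hd : IsMinDist C 5) (k : ℕ) :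
    2 * levelCount C 1 (k + 1) + 3 * levelCount C 2 3 * levelCount C 2 (k + 1) +
        (13 - 3 * levelCount C 2 3) * levelCount C 3 (k + 1) =
      (k + 2) * levelCount C 2 (k + 2) + (15 - k) * levelCount C 2 k := by
  obtain ⟨x, -, -, -, hx⟩ := hd.exists_mem_distToCode_eq (by norm_num : 2 * 2 ≤ 5)
  obtain ⟨down, across, up⟩ := neighborCount_of_distToCode_eq_two hreg hd hx
  rw [← hreg.levelCount_recurrence hx, down, across, Nat.eq_sub_of_add_eq up]

lemma neighborCount_of_distToCode_eq_three (hreg : IsCompletelyRegular C) (hd : IsMinDist C 5)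
    {y : Fin 15 → ZMod 2} (hy : distToCode C y = 3) :
    neighborCount C y 2 = 3 * levelCount C 3 3 ∧
      neighborCount C y 2 * levelCount C 2 3 + neighborCount C y 3 * levelCount C 3 3 =
        4 * levelCount C 3 4 ∧
      neighborCount C y 2 + neighborCount C y 3 + neighborCount C y 4 = 15 := by
  have down := hreg.neighborCount_mul_levelCount_self hy
  rw [hd.levelCount_eq hreg (by norm_num : 2 + 2 < 5)] at down
  exact ⟨by simpa using down, hreg.neighborCount_mul_levelCount_succ hy, neighborCount_add_eq hy⟩

lemma levelCount_two_three_eq_two_or_four (hreg : IsCompletelyRegular C) (hd : IsMinDist C 5) :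
    levelCount C 2 3 = 2 ∨ levelCount C 2 3 = 4 := by
  obtain ⟨x, -, -, -, hx⟩ := hd.exists_mem_distToCode_eq (by norm_num : 2 * 2 ≤ 5)
  have := neighborCount_of_distToCode_eq_two hreg hd hx
  have := two_mul_levelCount_zero_five hreg hd
  have := hd.levelCount_zero_pos hreg
  omega

lemma levelCount_two_three_ne_two (hreg : IsCompletelyRegular C) (hd : IsMinDist C 5) :
    levelCount C 2 3 ≠ 2 := by
  intro hlam
  obtain ⟨y, hy⟩ := exists_distToCode_eq_three hreg hd
  obtain ⟨down, across, total⟩ := neighborCount_of_distToCode_eq_three hreg hd hy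
  have ratio_one_four := two_mul_levelCount_one_four hreg hd
  have ratio_two_four := fourteen_mul_levelCount_two_four hreg hd
  have rec_two := levelCount_two_recurrence hreg hd 2
  have rec_three := levelCount_two_recurrence hreg hd 3
  norm_num [hlam, hd.levelCount_eq hreg] at rec_two rec_three
  have b33 : levelCount C 3 3 = 3 := by omega
  have b24 : levelCount C 2 4 = 5 := by omega
  have five_dvd : 5 ∣ levelCount C 3 4 := by omega
  rw [down, hlam, b33] at across
  omega

lemma levelCount_two_three_eq_four (hreg : IsCompletelyRegular C) (hd : IsMinDist C 5) :
    levelCount C 2 3 = 4 :=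
  (levelCount_two_three_eq_two_or_four hreg hd).resolve_left (levelCount_two_three_ne_two hreg hd)

lemma levelCount_three_three_eq_five (hreg : IsCompletelyRegular C) (hd : IsMinDist C 5) :
    levelCount C 3 3 = 5 := by
  obtain ⟨y, hy⟩ := exists_distToCode_eq_three hreg hd
  obtain ⟨down, -, total⟩ := neighborCount_of_distToCode_eq_three hreg hd hy
  have b33_pos := hy ▸ hreg.levelCount_self_pos hd.nonempty y
  have ratio_two_four := fourteen_mul_levelCount_two_four hreg hd
  have rec_two := levelCount_two_recurrence hreg hd 2
  norm_num [levelCount_two_three_eq_four hreg hd, hd.levelCount_eq hreg] at rec_two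
  have five_dvd : 5 ∣ levelCount C 2 4 := by omega
  omega

lemma levelCount_three_recurrence (hreg : IsCompletelyRegular C) (hd : IsMinDist C 5) (k : ℕ) :
    15 * levelCount C 2 (k + 1) =
      (k + 2) * levelCount C 3 (k + 2) + (15 - k) * levelCount C 3 k := by
  obtain ⟨y, hy⟩ := exists_distToCode_eq_three hreg hd
  obtain ⟨down, -, total⟩ := neighborCount_of_distToCode_eq_three hreg hd hy
  rw [levelCount_three_three_eq_five hreg hd] at down
  obtain ⟨across, up⟩ : neighborCount C y 3 = 0 ∧ neighborCount C y 4 = 0 := by omega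
  simpa [down, across, up] using hreg.levelCount_recurrence hy k

/-- The quotient matrix of the distance partition of a completely regular code of length 15 and
minimum distance 5, whose levels are `0, …, 3`. -/
def quotientMatrix : Matrix (Fin 4) (Fin 4) ℕ :=
  !![0, 15, 0, 0;
     1, 0, 14, 0;
     0, 2, 12, 1;
     0, 0, 15, 0]

/-- The outer distribution matrix of a completely regular code of length 15 and minimum distance 5
(such as the punctured Nordstrom–Robinson code): row `j` lists the numbers of codewords at distances
`0, …, 15` from a vertex in level `j`. -/
def outerDistributionMatrix (j : Fin 4) (k : ℕ) : ℕ :=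
  (![[1, 0, 0, 0, 0, 42, 70, 15, 15, 70, 42, 0, 0, 0, 0, 1],
     [0, 1, 0, 0, 14, 28, 35, 50, 50, 35, 28, 14, 0, 0, 1, 0],
     [0, 0, 1, 4, 10, 23, 40, 50, 50, 40, 23, 10, 4, 1, 0, 0],
     [0, 0, 0, 5, 15, 18, 30, 60, 60, 30, 18, 15, 5, 0, 0, 0]] j).getD k 0

lemma outerDistributionMatrix_eq_zero_of_le (j : Fin 4) {k : ℕ} (hk : 16 ≤ k) :
    outerDistributionMatrix j k = 0 := by
  fin_cases j <;> exact List.getD_eq_default _ _ hk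

lemma satisfiesOuterRecurrence_outerDistributionMatrix :
    SatisfiesOuterRecurrence quotientMatrix 15 outerDistributionMatrix := by
  intro j k
  rcases lt_or_ge k 16 with hk | hk
  · revert j k
    decide
  · simp [outerDistributionMatrix_eq_zero_of_le _ (by omega : 16 ≤ k + 1),
      outerDistributionMatrix_eq_zero_of_le _ (by omega : 16 ≤ k + 2),
      outerDistributionMatrix_eq_zero_of_le _ hk]

lemma satisfiesOuterRecurrence_levelCount (hreg : IsCompletelyRegular C) (hd : IsMinDist C 5) :
    SatisfiesOuterRecurrence quotientMatrix 15 fun j => levelCount C j := by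
  intro j k
  have rec_zero := hd.levelCount_recurrence hreg (j := 0) (by norm_num) k
  have rec_one := hd.levelCount_recurrence hreg (j := 1) (by norm_num) k
  have rec_two := levelCount_two_recurrence hreg hd k
  have rec_three := levelCount_three_recurrence hreg hd k
  rw [levelCount_two_three_eq_four hreg hd] at rec_two
  fin_cases j <;> simp_all [Fin.sum_univ_four, quotientMatrix]

theorem levelCount_eq_outerDistributionMatrix (hreg : IsCompletelyRegular C)
    (hd : IsMinDist C 5) (j : Fin 4) (k : ℕ) :
    levelCount C j k = outerDistributionMatrix j k := by
  refine (satisfiesOuterRecurrence_levelCount hreg hd).unique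
    satisfiesOuterRecurrence_outerDistributionMatrix ?_ ?_ j k
  · intro j
    rw [hd.levelCount_eq hreg (by omega)]
    fin_cases j <;> rfl
  · intro j
    rw [hd.levelCount_eq hreg (by omega)]
    fin_cases j <;> rfl

lemma levelCount_zero_eq (hreg : IsCompletelyRegular C) (hd : IsMinDist C 5) (k : ℕ) :
    levelCount C 0 k = outerDistributionMatrix 0 k :=
  levelCount_eq_outerDistributionMatrix hreg hd 0 k

theorem ncard_eq (hreg : IsCompletelyRegular C) (hd : IsMinDist C 5) : C.ncard = 256 := by
  simp only [hreg.ncard_eq_sum_levelCount hd.nonempty, levelCount_zero_eq hreg hd]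
  decide

end LengthFifteen

/-- A binary completely regular code of length 15 with minimum distance 5 has
distance distribution `(1,0,0,0,0,42,70,15,15,70,42,0,0,0,0,1)`; in particular all
distances between codewords lie in `{0, 5, 6, 7, 8, 9, 10, 15}`. -/
theorem stmt_18 (C : Set (Fin 15 → ZMod 2)) (hC : C.Nonempty)
    (hreg : IsCompletelyRegular C) (hd : IsMinDist C 5) :
    (∀ i : ℕ,
      {p : (Fin 15 → ZMod 2) × (Fin 15 → ZMod 2) |
          p.1 ∈ C ∧ p.2 ∈ C ∧ hammingDist p.1 p.2 = i}.ncard =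
        if i = 0 then 256 else if i = 5 then 42 * 256 else if i = 6 then 70 * 256
          else if i = 7 then 15 * 256 else if i = 8 then 15 * 256
          else if i = 9 then 70 * 256 else if i = 10 then 42 * 256
          else if i = 15 then 256 else 0) ∧
    ∀ α ∈ C, ∀ β ∈ C, hammingDist α β ∈ ({0, 5, 6, 7, 8, 9, 10, 15} : Set ℕ) := by
  constructor
  · intro i
    rw [hreg.ncard_pairs_eq, LengthFifteen.ncard_eq hreg hd,
      LengthFifteen.levelCount_zero_eq hreg hd]
    rcases lt_or_ge i 16 with hi | hi
    · interval_cases i <;> rfl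
    · rw [LengthFifteen.outerDistributionMatrix_eq_zero_of_le 0 hi]
      split_ifs <;> omega
  · intro α hα β hβ
    have hpos : 0 < LengthFifteen.outerDistributionMatrix 0 (hammingDist α β) := by
      rw [← LengthFifteen.levelCount_zero_eq hreg hd, ← hreg.outerCount_eq_of_mem hα]
      exact outerCount_pos_iff.2 ⟨β, hβ, rfl⟩
    have hle : hammingDist α β ≤ 15 := by simpa using hammingDist_le_card_fintype (x := α) (y := β)
    generalize hammingDist α β = d at hpos hle
    interval_cases d <;> simp_all [LengthFifteen.outerDistributionMatrix]
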